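/- arXiv:1301.4963 — 2 statements merged into one kernel-verified Lean document; each statement's English description precedes it below -/
import Mathlib

section
/- Let m ≥ 1 be an integer. For s ≥ 0 let k(s) = ⌊√(s + 1/4) + 1/2⌋ and p(s) = k(s) mod m, and define N_N(s) = k(s)²/(2m) + k(s)/2 + p(s)(m − p(s))/(2m) and N_D(s) = k(s)²/(2m) − k(s)/2 + p(s)(m − p(s))/(2m). Define Ñ_±(t) = t/(2m) ± (1/2)√(t + 1/4) + (1/12)(m − 1/m) + 1/(6m) and A_N(t) = (1/t)∫₀ᵗ (N_N(s) − Ñ_+(s)) ds, A_D(t) = (1/t)∫₀ᵗ (N_D(s) − Ñ_−(s)) ds. Then there exists a continuous periodic function g of mean value zero and a constant C such that |A_N(t) − g(√(t + 1/4))| ≤ C t^{−1/2} and |A_D(t) − g(√(t + 1/4))| ≤ C t^{−1/2} for all t ≥ 1. -/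
open Real

/-! Put `x = √(s + 1/4)`, `k = round x` and `d = x - k`. Since `k² - s = -2 x d + d² + 1/4`, the
substitution `s = x² - 1/4` turns the error, which is `a (k² - s - 1/3) + b (k - x) + c k` with
`a = 1 / (2m)`, `b = ±1/2` and `c` an `m`-periodic sequence of mean zero, into
`-4 a x² d + x h(x)`, where `h` is `m`-periodic of mean zero. A mean-zero periodic function has a
bounded primitive, so integration by parts shows that `x h(x)` contributes `O(x)` to the integral,
while `x² d` contributes `x² (d² - 1/12) / 2 + O(x)`. Dividing by `t = x² - 1/4` leaves the profile
`-2 a (d² - 1/12)`. -/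

open MeasureTheory Set
open scoped Interval

lemma integral_mul_eq_sub_integral_deriv_mul {φ h : ℝ → ℝ} {a b : ℝ} (hφ : ContDiff ℝ 1 φ)
    (hh : IntervalIntegrable h volume a b) :
    ∫ x in a..b, φ x * h x =
      φ b * (∫ x in a..b, h x) - ∫ x in a..b, deriv φ x * ∫ y in a..x, h y := by
  have parts := (hφ.contDiffOn (s := [[a, b]])).absolutelyContinuousOnInterval
    |>.integral_mul_deriv_eq_deriv_mul
      (hh.absolutelyContinuousOnInterval_intervalIntegral left_mem_uIcc)
  rw [intervalIntegral.integral_same, mul_zero, sub_zero] at parts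
  rw [← parts]
  refine intervalIntegral.integral_congr_ae ?_
  filter_upwards [hh.ae_hasDerivAt_integral] with x hx hxab
  rw [(hx (uIoc_subset_uIcc hxab) a left_mem_uIcc).deriv]

/-- A locally integrable function of period `T > 0` whose integral over a period vanishes: the
oscillating terms of the error, which integration by parts shows to be negligible. -/
structure IsMeanZeroPeriodic (h : ℝ → ℝ) (T : ℝ) : Prop where
  pos : 0 < T
  periodic : Function.Periodic h T
  intervalIntegrable : ∀ a b, IntervalIntegrable h volume a b
  integral_eq_zero : ∫ x in (0 : ℝ)..T, h x = 0

namespace IsMeanZeroPeriodic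

variable {h : ℝ → ℝ} {T : ℝ}

lemma intervalIntegrable_mul (hh : IsMeanZeroPeriodic h T) {φ : ℝ → ℝ} (hφ : Continuous φ)
    (a b : ℝ) : IntervalIntegrable (fun x ↦ φ x * h x) volume a b :=
  (hh.intervalIntegrable a b).continuousOn_mul hφ.continuousOn

lemma periodic_integral (hh : IsMeanZeroPeriodic h T) :
    Function.Periodic (fun x ↦ ∫ y in (0 : ℝ)..x, h y) T := fun x ↦ by
  have add := hh.periodic.intervalIntegral_add_eq_add 0 x hh.intervalIntegrable
  rwa [zero_add, hh.integral_eq_zero, add_zero] at add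

lemma exists_abs_integral_le (hh : IsMeanZeroPeriodic h T) :
    ∃ M, ∀ a b, |∫ x in a..b, h x| ≤ M := by
  have bounded := hh.periodic_integral.isBounded_of_continuous hh.pos.ne'
    (intervalIntegral.continuous_primitive hh.intervalIntegrable 0)
  obtain ⟨M, hM⟩ := Metric.isBounded_iff.1 bounded
  refine ⟨M, fun a b ↦ ?_⟩
  rw [← intervalIntegral.integral_interval_sub_left (hh.intervalIntegrable 0 b)
    (hh.intervalIntegrable 0 a), ← Real.dist_eq]
  exact hM (mem_range_self b) (mem_range_self a)

lemma exists_abs_integral_id_mul_le (hh : IsMeanZeroPeriodic h T) :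
    ∃ C, 0 ≤ C ∧ ∀ a b, |∫ x in a..b, x * h x| ≤ C * (|a| + |b|) := by
  obtain ⟨M, hM⟩ := hh.exists_abs_integral_le
  have hM₀ : 0 ≤ M := (abs_nonneg _).trans (hM 0 0)
  refine ⟨2 * M, by positivity, fun a b ↦ ?_⟩
  have boundary : |b * ∫ x in a..b, h x| ≤ |b| * M := by
    rw [abs_mul]
    gcongr
    exact hM a b
  have inner : ‖∫ x in a..b, ∫ y in a..x, h y‖ ≤ M * |b - a| :=
    intervalIntegral.norm_integral_le_of_norm_le_const fun x _ ↦ hM a x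
  have parts := integral_mul_eq_sub_integral_deriv_mul contDiff_id (hh.intervalIntegrable a b)
  simp only [id_eq, deriv_id', one_mul] at parts
  calc |∫ x in a..b, x * h x| ≤ |b| * M + M * |b - a| := by
        rw [parts]
        exact (abs_sub _ _).trans (add_le_add boundary inner)
    _ ≤ |b| * M + M * (|b| + |a|) := by gcongr; exact abs_sub _ _
    _ ≤ 2 * M * (|a| + |b|) := by nlinarith [mul_nonneg hM₀ (abs_nonneg a)]

end IsMeanZeroPeriodic

section RoundCells

variable {ψ : ℤ → ℝ → ℝ}

lemma eqOn_comp_round (k : ℤ) :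
    EqOn (fun x : ℝ ↦ ψ (round x) (x - round x)) (fun x ↦ ψ k (x - k))
      (uIoo (k - 1 / 2 : ℝ) (k + 1 / 2)) := by
  intro x hx
  rw [uIoo_of_le (by linarith)] at hx
  simp only [round_eq_iff.2 (Ioo_subset_Ico_self hx)]

lemma intervalIntegrable_comp_round_cell (k : ℤ) (hψ : Continuous (ψ k)) :
    IntervalIntegrable (fun x : ℝ ↦ ψ (round x) (x - round x)) volume (k - 1 / 2) (k + 1 / 2) := by
  have cont : Continuous fun x : ℝ ↦ ψ k (x - k) := by fun_prop
  exact (cont.intervalIntegrable _ _).congr_uIoo (eqOn_comp_round k).symm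

lemma integral_comp_round_cell (k : ℤ) :
    ∫ x in (k - 1 / 2 : ℝ)..(k + 1 / 2), ψ (round x) (x - round x) =
      ∫ y in (-(1 / 2) : ℝ)..(1 / 2), ψ k y := by
  rw [intervalIntegral.integral_congr_uIoo (eqOn_comp_round k),
    intervalIntegral.integral_comp_sub_right (ψ k)]
  congr 1 <;> ring

lemma isMeanZeroPeriodic_comp_round {m : ℕ} (hm : 0 < m) (hψ : ∀ k, Continuous (ψ k))
    (hper : Function.Periodic ψ m)
    (hsum : ∑ k ∈ Finset.range m, ∫ y in (-(1 / 2) : ℝ)..(1 / 2), ψ k y = 0) :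
    IsMeanZeroPeriodic (fun x ↦ ψ (round x) (x - round x)) m := by
  have periodic : Function.Periodic (fun x : ℝ ↦ ψ (round x) (x - round x)) m := fun x ↦ by
    simp only [round_add_natCast, Int.cast_add, Int.cast_natCast, add_sub_add_right_eq_sub, hper _]
  let node : ℕ → ℝ := fun k ↦ k - 1 / 2
  have node_succ (k : ℕ) : node (k + 1) = ((k : ℤ) : ℝ) + 1 / 2 := by
    simp only [node]; push_cast; ring
  have cell (k : ℕ) : IntervalIntegrable (fun x : ℝ ↦ ψ (round x) (x - round x)) volume
      (node k) (node (k + 1)) := by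
    rw [node_succ]
    exact_mod_cast intervalIntegrable_comp_round_cell k (hψ k)
  have node_m : node m = node 0 + m := by simp only [node]; push_cast; ring
  have period : IntervalIntegrable (fun x : ℝ ↦ ψ (round x) (x - round x)) volume
      (node 0) (node 0 + m) := node_m ▸ IntervalIntegrable.trans_iterate fun k _ ↦ cell k
  refine ⟨by exact_mod_cast hm, periodic,
    periodic.intervalIntegrable (by exact_mod_cast hm.ne') period, ?_⟩
  calc ∫ x in (0 : ℝ)..m, ψ (round x) (x - round x)
      = ∫ x in (node 0)..(node m), ψ (round x) (x - round x) := by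
        simpa only [zero_add, ← node_m] using periodic.intervalIntegral_add_eq 0 (node 0)
    _ = ∑ k ∈ Finset.range m, ∫ x in (node k)..(node (k + 1)), ψ (round x) (x - round x) :=
        (intervalIntegral.sum_integral_adjacent_intervals fun k _ ↦ cell k).symm
    _ = ∑ k ∈ Finset.range m, ∫ y in (-(1 / 2) : ℝ)..(1 / 2), ψ k y := by
        refine Finset.sum_congr rfl fun k _ ↦ ?_
        rw [node_succ]
        exact_mod_cast integral_comp_round_cell (ψ := ψ) k
    _ = 0 := hsum

end RoundCells

/-- The periodic second Bernoulli function, translated so that its maxima lie at the half-integers;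
up to a factor it is the limiting profile of the average error. -/
noncomputable def centeredBernoulliTwo (x : ℝ) : ℝ := (x - round x) ^ 2 - 1 / 12

lemma isMeanZeroPeriodic_sub_round : IsMeanZeroPeriodic (fun x ↦ x - round x) 1 := by
  simpa using isMeanZeroPeriodic_comp_round (ψ := fun _ y ↦ y) one_pos (fun _ ↦ continuous_id)
    (fun _ ↦ rfl) (by simp)

lemma isMeanZeroPeriodic_centeredBernoulliTwo : IsMeanZeroPeriodic centeredBernoulliTwo 1 := by
  have h := isMeanZeroPeriodic_comp_round (ψ := fun _ y ↦ y ^ 2 - 1 / 12) one_pos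
    (fun _ ↦ by fun_prop) (fun _ ↦ rfl) (by norm_num)
  rwa [Nat.cast_one] at h

lemma integral_zero_sub_round (x : ℝ) :
    ∫ y in (0 : ℝ)..x, (y - round y) = (x - round x) ^ 2 / 2 := by
  have reduce : ∫ y in (0 : ℝ)..x, (y - round y) =
      ∫ y in (0 : ℝ)..(x - round x), (y - round y) := by
    simpa using (isMeanZeroPeriodic_sub_round.periodic_integral.sub_int_mul_eq (round x)).symm
  have hx : |x - round x| ≤ 1 / 2 := abs_sub_round x
  have near_zero : EqOn (fun y : ℝ ↦ y - round y) (fun y ↦ y) (uIoo 0 (x - round x)) := by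
    intro y hy
    have hy₀ : round y = 0 := by
      rw [round_eq_zero_iff]
      rw [uIoo, mem_Ioo] at hy
      grind
    simp [hy₀]
  rw [reduce, intervalIntegral.integral_congr_uIoo near_zero, integral_id]
  ring

lemma integral_sub_round (a b : ℝ) :
    ∫ x in a..b, (x - round x) = (centeredBernoulliTwo b - centeredBernoulliTwo a) / 2 := by
  have int := isMeanZeroPeriodic_sub_round.intervalIntegrable
  rw [← intervalIntegral.integral_interval_sub_left (int 0 b) (int 0 a), integral_zero_sub_round,
    integral_zero_sub_round, centeredBernoulliTwo, centeredBernoulliTwo]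
  ring

lemma continuous_centeredBernoulliTwo : Continuous centeredBernoulliTwo := by
  have primitive : centeredBernoulliTwo =
      fun x ↦ 2 * (∫ y in (0 : ℝ)..x, (y - round y)) - 1 / 12 := by
    funext x
    rw [integral_zero_sub_round, centeredBernoulliTwo]
    ring
  have cont := intervalIntegral.continuous_primitive
    isMeanZeroPeriodic_sub_round.intervalIntegrable 0
  rw [primitive]
  fun_prop

lemma abs_centeredBernoulliTwo_le (x : ℝ) : |centeredBernoulliTwo x| ≤ 1 / 6 := by
  have sq_le : (x - round x) ^ 2 ≤ (1 / 2) ^ 2 := sq_le_sq.2 (by simpa using abs_sub_round x)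
  rw [centeredBernoulliTwo, abs_le]
  constructor <;> nlinarith [sq_nonneg (x - round x)]

lemma integral_sq_mul_sub_round (a b : ℝ) :
    ∫ x in a..b, x ^ 2 * (x - round x) =
      (b ^ 2 * centeredBernoulliTwo b - a ^ 2 * centeredBernoulliTwo a) / 2 -
        ∫ x in a..b, x * centeredBernoulliTwo x := by
  have parts := integral_mul_eq_sub_integral_deriv_mul (contDiff_id.pow 2)
    (isMeanZeroPeriodic_sub_round.intervalIntegrable a b)
  have int_mul : IntervalIntegrable (fun x ↦ x * centeredBernoulliTwo x) volume a b :=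
    (continuous_id.mul continuous_centeredBernoulliTwo).intervalIntegrable a b
  have int_const_mul : IntervalIntegrable (fun x ↦ centeredBernoulliTwo a * x) volume a b :=
    (continuous_const.mul continuous_id).intervalIntegrable a b
  have inner : ∫ x in a..b, deriv (fun x : ℝ ↦ id x ^ 2) x * ∫ y in a..x, (y - round y) =
      (∫ x in a..b, x * centeredBernoulliTwo x) - centeredBernoulliTwo a * ∫ x in a..b, x := by
    rw [← intervalIntegral.integral_const_mul,
      ← intervalIntegral.integral_sub int_mul int_const_mul]
    refine intervalIntegral.integral_congr fun x _ ↦ ?_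
    simp only [integral_sub_round, id_eq, deriv_pow_field, Nat.cast_ofNat]
    ring
  rw [inner, integral_sub_round, integral_id] at parts
  simp only [id_eq] at parts
  rw [parts]
  ring

section QuasiPolynomialError

/-- The error at `s` when the counting function equal to `a k² + b k + c k` on
`k² - k ≤ s < k² + k` is approximated by `a s + b √(s + 1/4) + a/3`. The term `a/3` makes the mean
error zero when `c` has mean zero. -/
noncomputable def quasiPolynomialError (a b : ℝ) (c : ℤ → ℝ) (s : ℝ) : ℝ :=
  a * ((round √(s + 1 / 4) : ℝ) ^ 2 - s - 1 / 3) + b * (round √(s + 1 / 4) - √(s + 1 / 4)) +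
    c (round √(s + 1 / 4))

/-- The factor `h` in the contribution `x h(x)` to the substituted error that remains once
`x² (x - round x)` is integrated by parts, as a function of `k = round x` and `y = x - k`. -/
noncomputable def residualWeight (a b : ℝ) (c : ℤ → ℝ) (k : ℤ) (y : ℝ) : ℝ :=
  6 * a * (y ^ 2 - 1 / 12) - 2 * b * y + 2 * c k

variable (a b : ℝ) {c : ℤ → ℝ} {m : ℕ}

lemma isMeanZeroPeriodic_residualWeight (hm : 0 < m) (hc : Function.Periodic c m)
    (hsum : ∑ k ∈ Finset.range m, c k = 0) :
    IsMeanZeroPeriodic (fun x ↦ residualWeight a b c (round x) (x - round x)) m := by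
  have cell (k : ℤ) : ∫ y in (-(1 / 2) : ℝ)..(1 / 2), residualWeight a b c k y = 2 * c k := by
    simp only [residualWeight]
    rw [intervalIntegral.integral_add (Continuous.intervalIntegrable (by fun_prop) _ _) (by simp),
      intervalIntegral.integral_sub (Continuous.intervalIntegrable (by fun_prop) _ _)
        (Continuous.intervalIntegrable (by fun_prop) _ _),
      intervalIntegral.integral_const_mul, intervalIntegral.integral_const_mul]
    norm_num
  refine isMeanZeroPeriodic_comp_round hm (fun k ↦ by unfold residualWeight; fun_prop)
    (fun k ↦ by funext y; simp only [residualWeight, hc k]) ?_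
  simp only [cell, ← Finset.mul_sum, hsum, mul_zero]

lemma quasiPolynomialError_sq_sub_mul (c : ℤ → ℝ) {x : ℝ} (hx : 0 ≤ x) :
    quasiPolynomialError a b c (x ^ 2 - 1 / 4) * (2 * x) =
      -(4 * a) * (x ^ 2 * (x - round x) + x * centeredBernoulliTwo x) +
        x * residualWeight a b c (round x) (x - round x) := by
  have sqrt_eq : √(x ^ 2 - 1 / 4 + 1 / 4) = x := by rw [sub_add_cancel, sqrt_sq hx]
  rw [quasiPolynomialError, sqrt_eq, residualWeight, centeredBernoulliTwo]
  ring

lemma integral_quasiPolynomialError (hm : 0 < m) (hc : Function.Periodic c m)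
    (hsum : ∑ k ∈ Finset.range m, c k = 0) {x : ℝ} (hx : 1 / 2 ≤ x) :
    ∫ s in (0 : ℝ)..(x ^ 2 - 1 / 4), quasiPolynomialError a b c s =
      -(2 * a) * (x ^ 2 * centeredBernoulliTwo x) + a / 12 +
        ∫ y in (1 / 2 : ℝ)..x, y * residualWeight a b c (round y) (y - round y) := by
  have substitution : ∫ y in (1 / 2 : ℝ)..x, quasiPolynomialError a b c (y ^ 2 - 1 / 4) * (2 * y) =
      ∫ s in (0 : ℝ)..(x ^ 2 - 1 / 4), quasiPolynomialError a b c s := by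
    have h := intervalIntegral.integral_comp_mul_deriv_of_deriv_nonneg (a := 1 / 2) (b := x)
      (f := fun y ↦ y ^ 2 - 1 / 4) (f' := fun y ↦ 2 * y) (g := quasiPolynomialError a b c)
      (by fun_prop) (fun y _ ↦ by simpa using (hasDerivAt_pow 2 y).sub_const (1 / 4))
      (fun y hy ↦ by rw [min_eq_left hx] at hy; linarith [hy.1])
    have lower : (1 / 2 : ℝ) ^ 2 - 1 / 4 = 0 := by norm_num
    rwa [lower] at h
  have hsq := isMeanZeroPeriodic_sub_round.intervalIntegrable_mul (continuous_pow 2) (1 / 2) x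
  have hB : IntervalIntegrable (fun y ↦ y * centeredBernoulliTwo y) volume (1 / 2) x :=
    isMeanZeroPeriodic_centeredBernoulliTwo.intervalIntegrable_mul continuous_id _ _
  have hres : IntervalIntegrable
      (fun y ↦ y * residualWeight a b c (round y) (y - round y)) volume (1 / 2) x :=
    (isMeanZeroPeriodic_residualWeight a b hm hc hsum).intervalIntegrable_mul continuous_id _ _
  have boundary : centeredBernoulliTwo (1 / 2) = 1 / 6 := by
    norm_num [centeredBernoulliTwo]
  have integrand : EqOn (fun y ↦ quasiPolynomialError a b c (y ^ 2 - 1 / 4) * (2 * y))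
      (fun y ↦ -(4 * a) * (y ^ 2 * (y - round y) + y * centeredBernoulliTwo y) +
        y * residualWeight a b c (round y) (y - round y)) [[1 / 2, x]] := fun y hy ↦
    quasiPolynomialError_sq_sub_mul a b c (by rw [uIcc_of_le hx] at hy; linarith [hy.1])
  rw [← substitution, intervalIntegral.integral_congr integrand,
    intervalIntegral.integral_add ((hsq.add hB).const_mul _) hres,
    intervalIntegral.integral_const_mul, intervalIntegral.integral_add hsq hB,
    integral_sq_mul_sub_round, boundary]
  ring

lemma exists_abs_integral_quasiPolynomialError_add_le (hm : 0 < m) (hc : Function.Periodic c m)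
    (hsum : ∑ k ∈ Finset.range m, c k = 0) :
    ∃ C, 0 ≤ C ∧ ∀ x, 1 / 2 ≤ x →
      |(∫ s in (0 : ℝ)..(x ^ 2 - 1 / 4), quasiPolynomialError a b c s) +
        2 * a * ((x ^ 2 - 1 / 4) * centeredBernoulliTwo x)| ≤ C * x := by
  obtain ⟨C, hC₀, hC⟩ := (isMeanZeroPeriodic_residualWeight a b hm hc hsum)
    |>.exists_abs_integral_id_mul_le
  refine ⟨2 * C + |a|, by positivity, fun x hx ↦ ?_⟩
  have residual : |∫ y in (1 / 2 : ℝ)..x, y * residualWeight a b c (round y) (y - round y)| ≤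
      2 * C * x := by
    refine (hC _ _).trans ?_
    rw [abs_of_pos (by norm_num : (0 : ℝ) < 1 / 2), abs_of_nonneg (by linarith)]
    nlinarith
  have boundary : |a * (1 / 12 - centeredBernoulliTwo x / 2)| ≤ |a| * x := by
    rw [abs_mul]
    gcongr
    have := abs_le.1 (abs_centeredBernoulliTwo_le x)
    exact abs_le.2 ⟨by linarith, by linarith⟩
  rw [integral_quasiPolynomialError a b hm hc hsum hx]
  calc _ = |(∫ y in (1 / 2 : ℝ)..x, y * residualWeight a b c (round y) (y - round y)) +
        a * (1 / 12 - centeredBernoulliTwo x / 2)| := by congr 1; ring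
    _ ≤ 2 * C * x + |a| * x := (abs_add_le _ _).trans (add_le_add residual boundary)
    _ = (2 * C + |a|) * x := by ring

lemma exists_abs_average_quasiPolynomialError_sub_le (hm : 0 < m) (hc : Function.Periodic c m)
    (hsum : ∑ k ∈ Finset.range m, c k = 0) :
    ∃ C, ∀ t : ℝ, 1 ≤ t →
      |1 / t * (∫ s in (0 : ℝ)..t, quasiPolynomialError a b c s) -
        -(2 * a) * centeredBernoulliTwo √(t + 1 / 4)| ≤ C * t ^ (-(1 / 2) : ℝ) := by
  obtain ⟨C, hC₀, hC⟩ := exists_abs_integral_quasiPolynomialError_add_le a b hm hc hsum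
  refine ⟨2 * C, fun t ht ↦ ?_⟩
  have ht₀ : 0 < t := by linarith
  have hx : 1 / 2 ≤ √(t + 1 / 4) := le_sqrt_of_sq_le (by linarith)
  have hx' : √(t + 1 / 4) ≤ 2 * √t := by
    rw [sqrt_le_left (by positivity), mul_pow, sq_sqrt ht₀.le]
    linarith
  have bound := hC _ hx
  rw [sq_sqrt (by linarith), add_sub_cancel_right] at bound
  have rpow_eq : t ^ (-(1 / 2) : ℝ) = √t / t := by
    rw [rpow_neg ht₀.le, ← sqrt_eq_rpow, sqrt_div_self]
  calc _ = |(∫ s in (0 : ℝ)..t, quasiPolynomialError a b c s) +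
        2 * a * (t * centeredBernoulliTwo √(t + 1 / 4))| / t := by
        rw [← abs_of_pos ht₀, ← abs_div, abs_of_pos ht₀]
        congr 1
        field_simp
        ring
    _ ≤ C * (2 * √t) / t := by gcongr; exact bound.trans (by gcongr)
    _ = 2 * C * t ^ (-(1 / 2) : ℝ) := by rw [rpow_eq]; ring

end QuasiPolynomialError

section Lune

/-- The deviation of the term `p (m - p) / (2m)`, `p = k mod m`, of the counting functions of the
lune from its mean over a period. -/
noncomputable def luneFluctuation (m : ℕ) (k : ℤ) : ℝ :=
  ((k % m : ℤ) : ℝ) * (m - (k % m : ℤ)) / (2 * m) - 1 / 12 * (m - 1 / m)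

lemma periodic_luneFluctuation (m : ℕ) : Function.Periodic (luneFluctuation m) m := fun k ↦ by
  simp only [luneFluctuation, Int.add_emod_right]

lemma sum_range_mul_sub (n : ℕ) (x : ℝ) :
    ∑ p ∈ Finset.range n, (p : ℝ) * (x - p) =
      x * (n * (n - 1)) / 2 - n * (n - 1) * (2 * n - 1) / 6 := by
  induction n with
  | zero => simp
  | succ n ih =>
    rw [Finset.sum_range_succ, ih]
    push_cast
    ring

lemma sum_luneFluctuation {m : ℕ} (hm : 0 < m) :
    ∑ k ∈ Finset.range m, luneFluctuation m k = 0 := by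
  have reduce : ∀ k ∈ Finset.range m, luneFluctuation m k =
      (k : ℝ) * (m - k) / (2 * m) - 1 / 12 * (m - 1 / m) := fun k hk ↦ by
    rw [luneFluctuation, ← Int.natCast_mod, Nat.mod_eq_of_lt (Finset.mem_range.1 hk),
      Int.cast_natCast]
  rw [Finset.sum_congr rfl reduce, Finset.sum_sub_distrib, ← Finset.sum_div, sum_range_mul_sub,
    Finset.sum_const, Finset.card_range, nsmul_eq_mul]
  field_simp
  ring

lemma exists_abs_average_luneError_sub_le {m : ℕ} (hm : 0 < m) (b : ℝ) {f : ℝ → ℝ}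
    (hf : ∀ s, 0 ≤ s → f s = quasiPolynomialError (1 / (2 * m)) b (luneFluctuation m) s) :
    ∃ C, ∀ t : ℝ, 1 ≤ t →
      |1 / t * (∫ s in (0 : ℝ)..t, f s) - -(1 / m) * centeredBernoulliTwo √(t + 1 / 4)| ≤
        C * t ^ (-(1 / 2) : ℝ) := by
  obtain ⟨C, hC⟩ := exists_abs_average_quasiPolynomialError_sub_le (1 / (2 * m)) b hm
    (periodic_luneFluctuation m) (sum_luneFluctuation hm)
  refine ⟨C, fun t ht ↦ ?_⟩
  have integral_eq : ∫ s in (0 : ℝ)..t, f s =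
      ∫ s in (0 : ℝ)..t, quasiPolynomialError (1 / (2 * m)) b (luneFluctuation m) s :=
    intervalIntegral.integral_congr fun s hs ↦
      hf s (by rw [uIcc_of_le (by linarith)] at hs; exact hs.1)
  have coeff : (1 / m : ℝ) = 2 * (1 / (2 * m)) := by field_simp
  rw [integral_eq, coeff]
  exact hC t ht

end Lune

/-- Average error asymptotics for the lune `L_{2m}` with Neumann and Dirichlet boundary
conditions: there is a continuous periodic function `g` of mean value zero such that both
averages equal `g(√(t + 1/4)) + O(t^{-1/2})`. -/
theorem lune_average_error (m : ℕ) (hm : 1 ≤ m) (NN ND : ℝ → ℝ)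
    (hNN : ∀ s : ℝ, 0 ≤ s → NN s =
      (⌊Real.sqrt (s + 1 / 4) + 1 / 2⌋ : ℝ) ^ 2 / (2 * m)
        + (⌊Real.sqrt (s + 1 / 4) + 1 / 2⌋ : ℝ) / 2
        + ((⌊Real.sqrt (s + 1 / 4) + 1 / 2⌋ % (m : ℤ) : ℤ) : ℝ)
          * ((m : ℝ) - ((⌊Real.sqrt (s + 1 / 4) + 1 / 2⌋ % (m : ℤ) : ℤ) : ℝ)) / (2 * m))
    (hND : ∀ s : ℝ, 0 ≤ s → ND s =
      (⌊Real.sqrt (s + 1 / 4) + 1 / 2⌋ : ℝ) ^ 2 / (2 * m)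
        - (⌊Real.sqrt (s + 1 / 4) + 1 / 2⌋ : ℝ) / 2
        + ((⌊Real.sqrt (s + 1 / 4) + 1 / 2⌋ % (m : ℤ) : ℤ) : ℝ)
          * ((m : ℝ) - ((⌊Real.sqrt (s + 1 / 4) + 1 / 2⌋ % (m : ℤ) : ℤ) : ℝ)) / (2 * m)) :
    ∃ g : ℝ → ℝ, ∃ T > (0 : ℝ), Continuous g ∧ (∀ x : ℝ, g (x + T) = g x) ∧
      (∫ x in (0:ℝ)..T, g x) = 0 ∧
      ∃ C : ℝ, ∀ t : ℝ, 1 ≤ t →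
        |(1 / t) * (∫ s in (0:ℝ)..t,
            (NN s - (s / (2 * m) + (1 / 2) * Real.sqrt (s + 1 / 4)
              + (1 / 12) * ((m : ℝ) - 1 / m) + 1 / (6 * m))))
          - g (Real.sqrt (t + 1 / 4))| ≤ C * t ^ (-(1/2) : ℝ) ∧
        |(1 / t) * (∫ s in (0:ℝ)..t,
            (ND s - (s / (2 * m) - (1 / 2) * Real.sqrt (s + 1 / 4)
              + (1 / 12) * ((m : ℝ) - 1 / m) + 1 / (6 * m))))
          - g (Real.sqrt (t + 1 / 4))| ≤ C * t ^ (-(1/2) : ℝ) := by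
  obtain ⟨C₁, h₁⟩ := exists_abs_average_luneError_sub_le hm (1 / 2)
    (f := fun s ↦ NN s - (s / (2 * m) + 1 / 2 * √(s + 1 / 4) + 1 / 12 * ((m : ℝ) - 1 / m) +
      1 / (6 * m))) fun s hs ↦ by
    simp only [hNN s hs, quasiPolynomialError, luneFluctuation, round_eq]
    ring
  obtain ⟨C₂, h₂⟩ := exists_abs_average_luneError_sub_le hm (-(1 / 2))
    (f := fun s ↦ ND s - (s / (2 * m) - 1 / 2 * √(s + 1 / 4) + 1 / 12 * ((m : ℝ) - 1 / m) +
      1 / (6 * m))) fun s hs ↦ by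
    simp only [hND s hs, quasiPolynomialError, luneFluctuation, round_eq]
    ring
  have profile := isMeanZeroPeriodic_centeredBernoulliTwo
  refine ⟨fun x ↦ -(1 / m) * centeredBernoulliTwo x, 1, one_pos,
    continuous_const.mul continuous_centeredBernoulliTwo,
    fun x ↦ congrArg (-(1 / m : ℝ) * ·) (profile.periodic x), ?_,
    max C₁ C₂, fun t ht ↦ ⟨(h₁ t ht).trans ?_, (h₂ t ht).trans ?_⟩⟩
  · rw [intervalIntegral.integral_const_mul, profile.integral_eq_zero, mul_zero]
  · gcongr
    exact le_max_left _ _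
  · gcongr
    exact le_max_right _ _
end

section
/- Let m be an even positive integer. For s ≥ 0 let k(s) = ⌊√(s + 1/4) + 1/2⌋ and p(s) = k(s) mod m, and define N(s) = k(s)²/(4m) + k(s)/4 + p(s)(m − p(s))/(4m) if p(s) is even, and N(s) = k(s)²/(4m) + (1/4 + 1/(2m))k(s) + p(s)(m − p(s))/(4m) + (m − p(s))/(2m) if p(s) is odd. Define Ñ(t) = t/(4m) + (1/4 + 1/(4m))√(t + 1/4) + (1/24)(m − 1/m) + 1/8 + 1/(12m) and A(t) = (1/t)∫₀ᵗ (N(s) − Ñ(s)) ds. Then there exist a continuous periodic function g of mean value zero and a constant C such that |A(t) − g(√(t + 1/4))| ≤ C t^{−1/2} for all t ≥ 1. -/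
open Real

/-!
In the variable `x = √(s + 1/4)`, the error `N s - Ñ s` equals `x h(x) + b(x)`, where `h` and `b`
are periodic of period `m` and, because `m` is even, have mean value zero. Since `ds = 2x dx`,
integrating `2x² h(x)` by parts yields `2 X² H(X)`, with `H` the primitive of `h` of mean value
zero, up to integrals of `x` times a periodic function of mean value zero, which are only `O(X)`.
Dividing by `t = X² - 1/4` leaves `2 H(X) + O(t^{-1/2})`.
-/

section MeanZeroPeriodic

open MeasureTheory

/-- Locally integrable `T`-periodic functions of mean value zero. The interval `0..T` in
`integral_eq_zero` is a choice: by periodicity any interval of length `T` would do. -/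
structure IsMeanZeroPeriodic_s19 (φ : ℝ → ℝ) (T : ℝ) : Prop where
  intervalIntegrable : ∀ a b, IntervalIntegrable φ volume a b
  periodic : Function.Periodic φ T
  integral_eq_zero : ∫ x in (0 : ℝ)..T, φ x = 0

/-- The primitive of `φ` normalised to have mean value zero over `0..T`. -/
noncomputable def centeredPrimitive (φ : ℝ → ℝ) (T x : ℝ) : ℝ :=
  (∫ y in (0 : ℝ)..x, φ y) - ⨍ z in (0 : ℝ)..T, ∫ y in (0 : ℝ)..z, φ y

variable {φ h b : ℝ → ℝ} {T : ℝ}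

theorem continuous_centeredPrimitive
    (hφ : ∀ a b, IntervalIntegrable φ volume a b) (T : ℝ) :
    Continuous (centeredPrimitive φ T) :=
  (intervalIntegral.continuous_primitive hφ 0).sub continuous_const

theorem centeredPrimitive_sub (hφ : ∀ a b, IntervalIntegrable φ volume a b)
    (T x y : ℝ) :
    centeredPrimitive φ T y - centeredPrimitive φ T x = ∫ z in x..y, φ z := by
  rw [centeredPrimitive, centeredPrimitive, sub_sub_sub_cancel_right,
    intervalIntegral.integral_interval_sub_left (hφ 0 y) (hφ 0 x)]

theorem integral_centeredPrimitive (hφ : ∀ a b, IntervalIntegrable φ volume a b)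
    (T : ℝ) : ∫ x in (0 : ℝ)..T, centeredPrimitive φ T x = 0 := by
  rcases eq_or_ne T 0 with rfl | hT
  · exact intervalIntegral.integral_same
  · have hc := (intervalIntegral.continuous_primitive hφ 0).intervalIntegrable (μ := volume) 0 T
    simp only [centeredPrimitive, intervalIntegral.integral_sub hc intervalIntegrable_const,
      intervalIntegral.integral_const, interval_average_eq, sub_zero, smul_eq_mul,
      mul_inv_cancel_left₀ hT, sub_self]

theorem integral_mul_eq_sub_integral_deriv_mul_centeredPrimitive {u : ℝ → ℝ} {x y : ℝ}
    (hφ : ∀ a b, IntervalIntegrable φ volume a b)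
    (hu : AbsolutelyContinuousOnInterval u x y) (T : ℝ) :
    ∫ z in x..y, u z * φ z = u y * centeredPrimitive φ T y - u x * centeredPrimitive φ T x
      - ∫ z in x..y, deriv u z * centeredPrimitive φ T z := by
  have h_eq : centeredPrimitive φ T = fun z => centeredPrimitive φ T x + ∫ w in x..z, φ w := by
    funext z
    rw [← centeredPrimitive_sub hφ T, add_sub_cancel]
  have h_ac : AbsolutelyContinuousOnInterval (centeredPrimitive φ T) x y := by
    rw [h_eq]
    exact (LipschitzWith.const _).lipschitzOnWith.absolutelyContinuousOnInterval.add
      ((hφ x y).absolutelyContinuousOnInterval_intervalIntegral Set.left_mem_uIcc)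
  rw [← hu.integral_mul_deriv_eq_deriv_mul h_ac]
  refine intervalIntegral.integral_congr_ae ?_
  filter_upwards [(hφ x y).ae_hasDerivAt_integral] with z hz hz_mem
  rw [h_eq, ((hz (Set.uIoc_subset_uIcc hz_mem) x Set.left_mem_uIcc).const_add _).deriv]

namespace IsMeanZeroPeriodic_s19

theorem primitive (hφ : IsMeanZeroPeriodic_s19 φ T) :
    IsMeanZeroPeriodic_s19 (centeredPrimitive φ T) T where
  intervalIntegrable := (continuous_centeredPrimitive hφ.intervalIntegrable T).intervalIntegrable
  periodic x := by
    rw [← sub_eq_zero, centeredPrimitive_sub hφ.intervalIntegrable,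
      hφ.periodic.intervalIntegral_add_eq x 0, zero_add, hφ.integral_eq_zero]
  integral_eq_zero := integral_centeredPrimitive hφ.intervalIntegrable T

theorem exists_abs_centeredPrimitive_le (hφ : IsMeanZeroPeriodic_s19 φ T) (hT : T ≠ 0) :
    ∃ B, ∀ x, |centeredPrimitive φ T x| ≤ B := by
  obtain ⟨B, hB⟩ := (hφ.primitive.periodic.isBounded_of_continuous hT
    (continuous_centeredPrimitive hφ.intervalIntegrable T)).exists_norm_le
  exact ⟨B, fun x => hB _ ⟨x, rfl⟩⟩

theorem exists_abs_integral_id_mul_le_s19 (hφ : IsMeanZeroPeriodic_s19 φ T) (hT : T ≠ 0) :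
    ∃ C, ∀ x y, |∫ z in x..y, z * φ z| ≤ C * (|x| + |y|) := by
  obtain ⟨B, hB⟩ := hφ.exists_abs_centeredPrimitive_le hT
  set Φ := centeredPrimitive φ T
  have hB₀ : 0 ≤ B := (abs_nonneg _).trans (hB 0)
  have abs_mul_le (z : ℝ) : |z * Φ z| ≤ B * |z| := by
    rw [abs_mul, mul_comm]
    gcongr
    exact hB z
  refine ⟨2 * B, fun x y => ?_⟩
  have by_parts : ∫ z in x..y, z * φ z = y * Φ y - x * Φ x - ∫ z in x..y, Φ z := by
    have := integral_mul_eq_sub_integral_deriv_mul_centeredPrimitive hφ.intervalIntegrable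
      (LipschitzWith.id.lipschitzOnWith.absolutelyContinuousOnInterval (a := x) (b := y)) T
    simpa only [id_eq, deriv_id, one_mul] using this
  have abs_integral_le : |∫ z in x..y, Φ z| ≤ B * (|y| + |x|) := by
    calc |∫ z in x..y, Φ z| ≤ B * |y - x| :=
          intervalIntegral.norm_integral_le_of_norm_le_const (f := Φ) fun z _ => hB z
      _ ≤ B * (|y| + |x|) := by
          gcongr
          exact abs_sub _ _
  calc |∫ z in x..y, z * φ z|
      ≤ |y * Φ y| + |x * Φ x| + |∫ z in x..y, Φ z| := by
        rw [by_parts]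
        exact (abs_sub _ _).trans (by gcongr; exact abs_sub _ _)
    _ ≤ B * |y| + B * |x| + B * (|y| + |x|) :=
        add_le_add_three (abs_mul_le y) (abs_mul_le x) abs_integral_le
    _ = 2 * B * (|x| + |y|) := by ring

theorem exists_abs_integral_sub_sq_mul_centeredPrimitive_le (hh : IsMeanZeroPeriodic_s19 h T)
    (hb : IsMeanZeroPeriodic_s19 b T) (hT : T ≠ 0) :
    ∃ C, ∀ x y, |(∫ z in x..y, 2 * z * (z * h z + b z))
      - 2 * (y ^ 2 * centeredPrimitive h T y - x ^ 2 * centeredPrimitive h T x)|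
        ≤ C * (|x| + |y|) := by
  obtain ⟨C₁, hC₁⟩ := hh.primitive.exists_abs_integral_id_mul_le_s19 hT
  obtain ⟨C₂, hC₂⟩ := hb.exists_abs_integral_id_mul_le_s19 hT
  set H := centeredPrimitive h T
  refine ⟨4 * C₁ + 2 * C₂, fun x y => ?_⟩
  have by_parts :
      ∫ z in x..y, z ^ 2 * h z = y ^ 2 * H y - x ^ 2 * H x - 2 * ∫ z in x..y, z * H z := by
    have h_ac : AbsolutelyContinuousOnInterval (fun z : ℝ => z ^ 2) x y :=
      (contDiff_id.pow 2).contDiffOn.absolutelyContinuousOnInterval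
    rw [integral_mul_eq_sub_integral_deriv_mul_centeredPrimitive hh.intervalIntegrable h_ac T,
      ← intervalIntegral.integral_const_mul]
    simp only [deriv_pow_field, Nat.cast_ofNat, Nat.add_one_sub_one, pow_one, mul_assoc, H]
  have integral_split : ∫ z in x..y, 2 * z * (z * h z + b z)
      = 2 * (∫ z in x..y, z ^ 2 * h z) + 2 * ∫ z in x..y, z * b z := by
    rw [← intervalIntegral.integral_const_mul, ← intervalIntegral.integral_const_mul,
      ← intervalIntegral.integral_add
        (((hh.intervalIntegrable x y).continuousOn_mul (by fun_prop)).const_mul 2)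
        (((hb.intervalIntegrable x y).continuousOn_mul (by fun_prop)).const_mul 2)]
    exact intervalIntegral.integral_congr fun z _ => by ring
  calc |(∫ z in x..y, 2 * z * (z * h z + b z)) - 2 * (y ^ 2 * H y - x ^ 2 * H x)|
      = |2 * (∫ z in x..y, z * b z) - 4 * ∫ z in x..y, z * H z| := by
        rw [integral_split, by_parts]
        ring_nf
    _ ≤ 2 * |∫ z in x..y, z * b z| + 4 * |∫ z in x..y, z * H z| := by
        refine (abs_sub _ _).trans_eq ?_
        rw [abs_mul, abs_mul, abs_two, abs_of_pos (four_pos (α := ℝ))]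
    _ ≤ 2 * (C₂ * (|x| + |y|)) + 4 * (C₁ * (|x| + |y|)) := by
        gcongr
        exacts [hC₂ x y, hC₁ x y]
    _ = (4 * C₁ + 2 * C₂) * (|x| + |y|) := by ring

end IsMeanZeroPeriodic_s19

theorem integral_comp_sqrt_add (F : ℝ → ℝ) {c t : ℝ} (hc : 0 ≤ c) (ht : 0 ≤ t) :
    ∫ s in (0 : ℝ)..t, F √(s + c) = ∫ x in √c..√(t + c), 2 * x * F x := by
  have nonneg_of_mem {x : ℝ} (hx : √c ≤ x) : 0 ≤ x := (sqrt_nonneg c).trans hx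
  have h_le : √c ≤ √(t + c) := sqrt_le_sqrt (by linarith)
  have change_var := intervalIntegral.integral_deriv_smul_comp_of_deriv_nonneg
    (a := √c) (b := √(t + c)) (f := fun x => x ^ 2 - c) (f' := fun x => 2 * x)
    (g := fun s => F √(s + c)) (by fun_prop)
    (fun x _ => by simpa using ((hasDerivAt_id x).pow 2).sub_const c)
    (fun x hx => mul_nonneg zero_le_two (nonneg_of_mem (by simpa [h_le] using hx.1.le)))
  rw [sq_sqrt hc, sq_sqrt (by linarith), sub_self, add_sub_cancel_right] at change_var
  rw [← change_var]
  refine intervalIntegral.integral_congr fun x hx => ?_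
  rw [Set.uIcc_of_le h_le] at hx
  simp only [Function.comp_apply, sub_add_cancel, sqrt_sq (nonneg_of_mem hx.1), smul_eq_mul]

theorem sqrt_add_le_add_sqrt {a c : ℝ} (ha : 0 ≤ a) (hc : 0 ≤ c) : √(a + c) ≤ √a + √c :=
  sqrt_le_iff.2 ⟨by positivity, by
    nlinarith [sq_sqrt ha, sq_sqrt hc, mul_nonneg (sqrt_nonneg a) (sqrt_nonneg c)]⟩

theorem IsMeanZeroPeriodic_s19.exists_abs_integral_comp_sqrt_sub_le
    (hh : IsMeanZeroPeriodic_s19 h T) (hb : IsMeanZeroPeriodic_s19 b T) (hT : T ≠ 0) {c : ℝ}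
    (hc : 0 ≤ c) :
    ∃ C : ℝ, ∀ t : ℝ, 1 ≤ t →
      |(∫ s in (0 : ℝ)..t, (√(s + c) * h √(s + c) + b √(s + c)))
        - 2 * t * centeredPrimitive h T √(t + c)| ≤ C * √t := by
  obtain ⟨B, hB⟩ := hh.exists_abs_centeredPrimitive_le hT
  obtain ⟨C, hC⟩ := hh.exists_abs_integral_sub_sq_mul_centeredPrimitive_le hb hT
  set H := centeredPrimitive h T
  have hC₀ : 0 ≤ C := by simpa using (abs_nonneg _).trans (hC 0 1)
  have hB₀ : 0 ≤ B := (abs_nonneg _).trans (hB 0)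
  refine ⟨C * (2 * √c + 1) + 4 * c * B, fun t ht => ?_⟩
  have ht₀ : 0 ≤ t := zero_le_one.trans ht
  rw [integral_comp_sqrt_add (fun x => x * h x + b x) hc ht₀]
  specialize hC √c √(t + c)
  rw [sq_sqrt hc, sq_sqrt (by linarith), abs_of_nonneg (sqrt_nonneg _),
    abs_of_nonneg (sqrt_nonneg _)] at hC
  set I := ∫ x in √c..√(t + c), 2 * x * (x * h x + b x)
  have boundary_le : |2 * c * (H √(t + c) - H √c)| ≤ 4 * c * B := by
    rw [abs_mul, abs_of_nonneg (by positivity)]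
    calc 2 * c * |H √(t + c) - H √c| ≤ 2 * c * (B + B) := by
          gcongr
          exact (abs_sub _ _).trans (add_le_add (hB _) (hB _))
      _ = 4 * c * B := by ring
  calc |I - 2 * t * H √(t + c)|
      = |I - 2 * ((t + c) * H √(t + c) - c * H √c) + 2 * c * (H √(t + c) - H √c)| := by ring_nf
    _ ≤ C * (√c + √(t + c)) + 4 * c * B := (abs_add_le _ _).trans (add_le_add hC boundary_le)
    _ ≤ C * (√c + (√t + √c)) + 4 * c * B := by gcongr; exact sqrt_add_le_add_sqrt ht₀ hc
    _ = C * √t + (2 * C * √c + 4 * c * B) * 1 := by ring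
    _ ≤ C * √t + (2 * C * √c + 4 * c * B) * √t := by gcongr; exact one_le_sqrt.2 ht
    _ = (C * (2 * √c + 1) + 4 * c * B) * √t := by ring

theorem IsMeanZeroPeriodic_s19.exists_abs_average_sub_centeredPrimitive_le
    (hh : IsMeanZeroPeriodic_s19 h T) (hb : IsMeanZeroPeriodic_s19 b T) (hT : T ≠ 0) {c : ℝ}
    (hc : 0 ≤ c) :
    ∃ C : ℝ, ∀ t : ℝ, 1 ≤ t →
      |(1 / t) * (∫ s in (0 : ℝ)..t, (√(s + c) * h √(s + c) + b √(s + c)))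
        - 2 * centeredPrimitive h T √(t + c)| ≤ C * t ^ (-(1 / 2) : ℝ) := by
  obtain ⟨C, hC⟩ := hh.exists_abs_integral_comp_sqrt_sub_le hb hT hc
  refine ⟨C, fun t ht => ?_⟩
  have ht₀ : 0 < t := zero_lt_one.trans_le ht
  have rpow_eq : t ^ (-(1 / 2) : ℝ) = √t / t := by
    rw [rpow_neg ht₀.le, ← sqrt_eq_rpow, sqrt_div_self]
  set I := ∫ s in (0 : ℝ)..t, (√(s + c) * h √(s + c) + b √(s + c))
  calc |1 / t * I - 2 * centeredPrimitive h T √(t + c)|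
      = |I - 2 * t * centeredPrimitive h T √(t + c)| / t := by
        rw [← abs_of_pos ht₀, ← abs_div, abs_of_pos ht₀]
        congr 1
        field_simp
    _ ≤ C * √t / t := by
        gcongr
        exact hC t ht
    _ = C * t ^ (-(1 / 2) : ℝ) := by rw [rpow_eq, mul_div_assoc]

end MeanZeroPeriodic

section PeriodicCellwise

open MeasureTheory

/-- The `n`-periodic function given on the unit cell around an integer `k` by `F (k % n)`, in the
coordinate centred at `k`. Cells are half-open, `[k - 1/2, k + 1/2)`, as for `round`. -/
noncomputable def periodicCellwise (n : ℕ) (F : ℤ → ℝ → ℝ) (x : ℝ) : ℝ :=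
  F (round x % n) (x - round x)

variable {n : ℕ} {F : ℤ → ℝ → ℝ}

theorem periodic_periodicCellwise (n : ℕ) (F : ℤ → ℝ → ℝ) :
    Function.Periodic (periodicCellwise n F) n := fun x => by
  simp only [periodicCellwise, round_add_natCast, Int.add_emod_right, Int.cast_add,
    Int.cast_natCast, add_sub_add_right_eq_sub]

theorem eqOn_periodicCellwise_cell (n : ℕ) (F : ℤ → ℝ → ℝ) (k : ℤ) :
    Set.EqOn (fun x : ℝ => F (k % n) (x - k)) (periodicCellwise n F)
      (Set.uIoo (k - 1 / 2 : ℝ) (k + 1 / 2)) := by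
  intro x hx
  rw [Set.uIoo_of_le (by linarith)] at hx
  have round_x : round x = k := by
    rw [round_eq, Int.floor_eq_iff]
    constructor <;> linarith [hx.1, hx.2]
  simp only [periodicCellwise, round_x]

theorem intervalIntegrable_periodicCellwise_cell {k : ℤ}
    (hF : IntervalIntegrable (F (k % n)) volume (-(1 / 2)) (1 / 2)) :
    IntervalIntegrable (periodicCellwise n F) volume (k - 1 / 2) (k + 1 / 2) := by
  refine IntervalIntegrable.congr_uIoo ?_ (eqOn_periodicCellwise_cell n F k)
  convert! hF.comp_sub_right (k : ℝ) using 1 <;> ring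

theorem integral_periodicCellwise_cell (n : ℕ) (F : ℤ → ℝ → ℝ) (k : ℤ) :
    ∫ x in (k - 1 / 2 : ℝ)..(k + 1 / 2), periodicCellwise n F x
      = ∫ u in (-(1 / 2) : ℝ)..(1 / 2), F (k % n) u := by
  rw [← intervalIntegral.integral_congr_uIoo (eqOn_periodicCellwise_cell n F k),
    intervalIntegral.integral_comp_sub_right (F (k % n))]
  congr 1 <;> ring

theorem intervalIntegrable_periodicCellwise (hn : n ≠ 0)
    (hF : ∀ k, IntervalIntegrable (F k) volume (-(1 / 2)) (1 / 2)) (a b : ℝ) :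
    IntervalIntegrable (periodicCellwise n F) volume a b := by
  have h_period := IntervalIntegrable.trans_iterate (n := n) (a := fun k : ℕ => (k : ℝ) - 1 / 2)
    (f := periodicCellwise n F) (μ := volume) fun k _ => by
      convert! intervalIntegrable_periodicCellwise_cell (k := k) (hF _) using 1
      push_cast
      ring
  refine (periodic_periodicCellwise n F).intervalIntegrable (t := -(1 / 2))
    (Nat.cast_ne_zero.2 hn) ?_ a b
  convert! h_period using 1 <;> push_cast <;> ring

theorem integral_periodicCellwise (hn : n ≠ 0)
    (hF : ∀ k, IntervalIntegrable (F k) volume (-(1 / 2)) (1 / 2)) :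
    ∫ x in (0 : ℝ)..n, periodicCellwise n F x
      = ∑ k ∈ Finset.range n, ∫ u in (-(1 / 2) : ℝ)..(1 / 2), F k u := by
  have shift : ∫ x in (0 : ℝ)..n, periodicCellwise n F x
      = ∫ x in ((0 : ℕ) - 1 / 2 : ℝ)..(n - 1 / 2), periodicCellwise n F x := by
    convert! (periodic_periodicCellwise n F).intervalIntegral_add_eq 0 (-(1 / 2)) using 2
    · rw [zero_add]
    · rw [Nat.cast_zero, zero_sub]
    · ring
  rw [shift, ← intervalIntegral.sum_integral_adjacent_intervals (a := fun k : ℕ => (k : ℝ) - 1 / 2)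
    fun k _ => intervalIntegrable_periodicCellwise hn hF _ _]
  refine Finset.sum_congr rfl fun k hk => ?_
  have emod_eq : (k : ℤ) % n = k := by exact_mod_cast Nat.mod_eq_of_lt (Finset.mem_range.1 hk)
  have cell := integral_periodicCellwise_cell n F k
  rw [emod_eq] at cell
  convert! cell using 2
  push_cast
  ring

theorem isMeanZeroPeriodic_periodicCellwise (hn : n ≠ 0)
    (hF : ∀ k, IntervalIntegrable (F k) volume (-(1 / 2)) (1 / 2))
    (h_sum : ∑ k ∈ Finset.range n, ∫ u in (-(1 / 2) : ℝ)..(1 / 2), F k u = 0) :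
    IsMeanZeroPeriodic_s19 (periodicCellwise n F) n where
  intervalIntegrable := intervalIntegrable_periodicCellwise hn hF
  periodic := periodic_periodicCellwise n F
  integral_eq_zero := (integral_periodicCellwise hn hF).trans h_sum

end PeriodicCellwise

theorem integral_quadratic_centered_cell (a b d : ℝ) :
    ∫ u in (-(1 / 2) : ℝ)..(1 / 2), (a + b * u + d * u ^ 2) = a + d / 12 := by
  have h_int {f : ℝ → ℝ} (hf : Continuous f) :
      IntervalIntegrable f MeasureTheory.volume (-(1 / 2)) (1 / 2) :=
    hf.intervalIntegrable _ _
  rw [intervalIntegral.integral_add (h_int (by fun_prop)) (h_int (by fun_prop)),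
    intervalIntegral.integral_add (h_int (by fun_prop)) (h_int (by fun_prop)),
    intervalIntegral.integral_const, intervalIntegral.integral_const_mul,
    intervalIntegral.integral_const_mul, integral_id, integral_pow, smul_eq_mul]
  ring

theorem sum_range_two_mul_ite_even {M : Type*} [AddCommMonoid M] (n : ℕ) (f g : ℕ → M) :
    ∑ k ∈ Finset.range (2 * n), (if Even k then f k else g k)
      = ∑ j ∈ Finset.range n, (f (2 * j) + g (2 * j + 1)) := by
  induction n with
  | zero => simp
  | succ n ih =>
    rw [Nat.mul_succ, Finset.sum_range_succ, Finset.sum_range_succ, Finset.sum_range_succ, ih,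
      if_pos (even_two_mul n), if_neg (Nat.not_even_two_mul_add_one n), add_assoc]

theorem sum_range_mul_sub_s19 {K : Type*} [Field K] [CharZero K] (n : ℕ) (a : K) :
    ∑ k ∈ Finset.range n, (k : K) * (a - k) = n * (n - 1) * (3 * a - 2 * n + 1) / 6 := by
  induction n with
  | zero => simp
  | succ n ih =>
    rw [Finset.sum_range_succ, ih]
    push_cast
    ring

theorem sum_range_sub_two_mul_add_one {R : Type*} [CommRing R] (n : ℕ) (a : R) :
    ∑ j ∈ Finset.range n, (a - (2 * j + 1)) = n * a - n ^ 2 := by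
  induction n with
  | zero => simp
  | succ n ih =>
    rw [Finset.sum_range_succ, ih]
    push_cast
    ring

section HalfLune

/-- The value of the eigenvalue counting function `N` of the half-lune `L_{2m}^{1/2}` (Neumann
conditions, `m` even) on the interval `k² - k ≤ t < k² + k`. -/
noncomputable def halfLuneCount (m : ℕ) (k : ℤ) : ℝ :=
  if Even (k % (m : ℤ)) then
    (k : ℝ) ^ 2 / (4 * m) + (k : ℝ) / 4
      + ((k % (m : ℤ) : ℤ) : ℝ) * ((m : ℝ) - ((k % (m : ℤ) : ℤ) : ℝ)) / (4 * m)
  else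
    (k : ℝ) ^ 2 / (4 * m) + (1 / 4 + 1 / (2 * m)) * (k : ℝ)
      + ((k % (m : ℤ) : ℤ) : ℝ) * ((m : ℝ) - ((k % (m : ℤ) : ℤ) : ℝ)) / (4 * m)
      + ((m : ℝ) - ((k % (m : ℤ) : ℤ) : ℝ)) / (2 * m)

/-- The refined asymptotics `Ñ` of the counting function of the half-lune `L_{2m}^{1/2}`. -/
noncomputable def halfLuneAsymptotics (m : ℕ) (t : ℝ) : ℝ :=
  t / (4 * m) + (1 / 4 + 1 / (4 * m)) * √(t + 1 / 4)
    + (1 / 24) * ((m : ℝ) - 1 / m) + 1 / 8 + 1 / (12 * m)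

/-- The coefficient of `x = √(t + 1/4)` in the error `N - Ñ`, at `x = k + u` with
`k ≡ p (mod m)` and `-1/2 ≤ u < 1/2`. -/
noncomputable def leadingError (m : ℕ) (p : ℤ) (u : ℝ) : ℝ :=
  (if Even p then -1 else 1) / (4 * m) + -(1 / (2 * m)) * u

/-- The part of the error `N - Ñ` that remains after `x * leadingError m p u` is removed, with
`x`, `p` and `u` as there. -/
noncomputable def boundedError (m : ℕ) (p : ℤ) (u : ℝ) : ℝ :=
  ((p : ℝ) * (m - p) / (4 * m) + (if Even p then 0 else (m - p : ℝ)) / (2 * m)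
      - (m / 24 + 1 / 8 - 1 / (48 * m)))
    + -(1 / 4 + (if Even p then 0 else 1) / (2 * m)) * u + 1 / (4 * m) * u ^ 2

variable {m : ℕ}

theorem isMeanZeroPeriodic_leadingError (hm_even : Even m) (hm : m ≠ 0) :
    IsMeanZeroPeriodic_s19 (periodicCellwise m (leadingError m)) m := by
  have integral_cell (k : ℕ) : ∫ u in (-(1 / 2) : ℝ)..(1 / 2), leadingError m k u
      = (if Even k then -1 else 1) / (4 * m) := by
    simpa [leadingError] using integral_quadratic_centered_cell
      ((if Even k then -1 else 1) / (4 * m)) (-(1 / (2 * m))) 0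
  refine isMeanZeroPeriodic_periodicCellwise hm
    (fun k => by unfold leadingError; exact Continuous.intervalIntegrable (by fun_prop) _ _) ?_
  obtain ⟨n, rfl⟩ := even_iff_exists_two_mul.1 hm_even
  simp only [integral_cell, ← Finset.sum_div, sum_range_two_mul_ite_even, neg_add_cancel,
    Finset.sum_const_zero, zero_div]

theorem isMeanZeroPeriodic_boundedError (hm_even : Even m) (hm : m ≠ 0) :
    IsMeanZeroPeriodic_s19 (periodicCellwise m (boundedError m)) m := by
  have integral_cell (k : ℕ) : ∫ u in (-(1 / 2) : ℝ)..(1 / 2), boundedError m k u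
      = (k : ℝ) * (m - k) / (4 * m) + (if Even k then 0 else (m - k : ℝ)) / (2 * m)
        + (-(m / 24 + 1 / 8 - 1 / (48 * m)) + 1 / (4 * m) / 12) := by
    unfold boundedError
    rw [integral_quadratic_centered_cell]
    simp only [Int.even_coe_nat, Int.cast_natCast]
    ring
  refine isMeanZeroPeriodic_periodicCellwise hm
    (fun k => by unfold boundedError; exact Continuous.intervalIntegrable (by fun_prop) _ _) ?_
  obtain ⟨n, rfl⟩ := even_iff_exists_two_mul.1 hm_even
  have hn : (n : ℝ) ≠ 0 := Nat.cast_ne_zero.2 (right_ne_zero_of_mul hm)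
  simp only [integral_cell, Finset.sum_add_distrib, ← Finset.sum_div, sum_range_mul_sub_s19,
    sum_range_two_mul_ite_even, zero_add, Finset.sum_const, Finset.card_range, nsmul_eq_mul]
  push_cast
  rw [sum_range_sub_two_mul_add_one]
  field_simp
  ring

theorem halfLuneCount_sub_halfLuneAsymptotics (m : ℕ) {s : ℝ} (hs : 0 ≤ s) :
    halfLuneCount m (round √(s + 1 / 4)) - halfLuneAsymptotics m s
      = √(s + 1 / 4) * periodicCellwise m (leadingError m) √(s + 1 / 4)
        + periodicCellwise m (boundedError m) √(s + 1 / 4) := by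
  have hs_eq : s = √(s + 1 / 4) ^ 2 - 1 / 4 := by rw [sq_sqrt (by linarith), add_sub_cancel_right]
  simp only [halfLuneCount, halfLuneAsymptotics, periodicCellwise, leadingError, boundedError]
  generalize √(s + 1 / 4) = x at hs_eq ⊢
  subst hs_eq
  split_ifs <;> ring

end HalfLune

/-- Average error asymptotics for the half-lune `L_{2m}^{1/2}` (with `m` even) with
Neumann boundary conditions on all edges: there is a continuous periodic function `g` of
mean value zero such that the average error is `g(√(t + 1/4)) + O(t^{-1/2})`. -/
theorem half_lune_average_error (m : ℕ) (hmeven : Even m) (hm : 0 < m) (N : ℝ → ℝ)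
    (hN : ∀ s : ℝ, 0 ≤ s → N s =
      if Even (⌊Real.sqrt (s + 1 / 4) + 1 / 2⌋ % (m : ℤ)) then
        (⌊Real.sqrt (s + 1 / 4) + 1 / 2⌋ : ℝ) ^ 2 / (4 * m)
          + (⌊Real.sqrt (s + 1 / 4) + 1 / 2⌋ : ℝ) / 4
          + ((⌊Real.sqrt (s + 1 / 4) + 1 / 2⌋ % (m : ℤ) : ℤ) : ℝ)
            * ((m : ℝ) - ((⌊Real.sqrt (s + 1 / 4) + 1 / 2⌋ % (m : ℤ) : ℤ) : ℝ)) / (4 * m)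
      else
        (⌊Real.sqrt (s + 1 / 4) + 1 / 2⌋ : ℝ) ^ 2 / (4 * m)
          + (1 / 4 + 1 / (2 * m)) * (⌊Real.sqrt (s + 1 / 4) + 1 / 2⌋ : ℝ)
          + ((⌊Real.sqrt (s + 1 / 4) + 1 / 2⌋ % (m : ℤ) : ℤ) : ℝ)
            * ((m : ℝ) - ((⌊Real.sqrt (s + 1 / 4) + 1 / 2⌋ % (m : ℤ) : ℤ) : ℝ)) / (4 * m)
          + ((m : ℝ) - ((⌊Real.sqrt (s + 1 / 4) + 1 / 2⌋ % (m : ℤ) : ℤ) : ℝ)) / (2 * m)) :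
    ∃ g : ℝ → ℝ, ∃ T > (0 : ℝ), Continuous g ∧ (∀ x : ℝ, g (x + T) = g x) ∧
      (∫ x in (0:ℝ)..T, g x) = 0 ∧
      ∃ C : ℝ, ∀ t : ℝ, 1 ≤ t →
        |(1 / t) * (∫ s in (0:ℝ)..t,
            (N s - (s / (4 * m) + (1 / 4 + 1 / (4 * m)) * Real.sqrt (s + 1 / 4)
              + (1 / 24) * ((m : ℝ) - 1 / m) + 1 / 8 + 1 / (12 * m))))
          - g (Real.sqrt (t + 1 / 4))| ≤ C * t ^ (-(1/2) : ℝ) := by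
  have hh := isMeanZeroPeriodic_leadingError hmeven hm.ne'
  have hb := isMeanZeroPeriodic_boundedError hmeven hm.ne'
  have hT : (0 : ℝ) < m := Nat.cast_pos.2 hm
  have hN_round (s : ℝ) (hs : 0 ≤ s) : N s = halfLuneCount m (round √(s + 1 / 4)) := by
    rw [hN s hs, round_eq, halfLuneCount]
  obtain ⟨C, hC⟩ := hh.exists_abs_average_sub_centeredPrimitive_le hb hT.ne'
    (c := 1 / 4) (by norm_num)
  refine ⟨fun x => 2 * centeredPrimitive (periodicCellwise m (leadingError m)) m x, m, hT,
    (continuous_centeredPrimitive hh.intervalIntegrable m).const_mul 2,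
    fun x => congrArg (2 * ·) (hh.primitive.periodic x), ?_, C, fun t ht => ?_⟩
  · rw [intervalIntegral.integral_const_mul, hh.primitive.integral_eq_zero, mul_zero]
  · refine (congrArg (fun I => |1 / t * I - _|) ?_).trans_le (hC t ht)
    refine intervalIntegral.integral_congr fun s hs => ?_
    rw [Set.uIcc_of_le (by linarith)] at hs
    simp only [hN_round s hs.1, ← halfLuneCount_sub_halfLuneAsymptotics m hs.1,
      halfLuneAsymptotics]
end
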